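/- Every finite-volume right-angled convex hyperbolic n-polyhedron (n ≥ 2) is simple at edges: each of its 1-dimensional faces is contained in exactly n − 1 facets. -/

import Mathlib

open scoped BigOperators

noncomputable section

/-- The Minkowski bilinear form `⟨x,y⟩ = -x₀y₀ + x₁y₁ + ⋯ + xₙyₙ` on `ℝ^{n+1}`. -/
def mink {n : ℕ} (x y : Fin (n + 1) → ℝ) : ℝ :=
  -(x 0 * y 0) + ∑ i : Fin n, x i.succ * y i.succ

/-- The hyperboloid model of the hyperbolic space `ℍⁿ`. -/
def Hyperboloid (n : ℕ) : Set (Fin (n + 1) → ℝ) :=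
  {x | mink x x = -1 ∧ 0 < x 0}

/-- The Klein projection `x ↦ (x₁/x₀, …, xₙ/x₀)` of the hyperboloid onto the unit ball. -/
def kleinMap {n : ℕ} (x : Fin (n + 1) → ℝ) : EuclideanSpace ℝ (Fin n) :=
  WithLp.toLp 2 fun i => x i.succ / x 0

/-- Dimension of a subset of a real vector space: the rank of its vector span. -/
def sdim {n : ℕ} (s : Set (EuclideanSpace ℝ (Fin n))) : ℕ :=
  Module.finrank ℝ (vectorSpan ℝ s)

/-- A convex hyperbolic `n`-polyhedron: a finite intersection of hyperbolic half-spaces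
`H_{eᵢ}⁻ = {x : ⟨eᵢ,x⟩ ≤ 0}` (with `⟨eᵢ,eᵢ⟩ = 1`) having nonempty interior
(equivalently, its Klein-model image has nonempty interior in `ℝⁿ`). -/
structure HypPolyhedron (n : ℕ) where
  m : ℕ
  e : Fin m → (Fin (n + 1) → ℝ)
  unit : ∀ i, mink (e i) (e i) = 1
  nonempty_int :
    (interior (kleinMap '' {x ∈ Hyperboloid n | ∀ i, mink (e i) x ≤ 0})).Nonempty

namespace HypPolyhedron

variable {n : ℕ} (P : HypPolyhedron n)

/-- The set of points of the polyhedron in the hyperboloid model. -/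
def carrier : Set (Fin (n + 1) → ℝ) :=
  {x ∈ Hyperboloid n | ∀ i, mink (P.e i) x ≤ 0}

/-- `P̄`: the closure of the Klein-model image of the polyhedron in the closed unit ball. -/
def cl : Set (EuclideanSpace ℝ (Fin n)) :=
  closure (kleinMap '' P.carrier)

/-- The `k`-faces of `P`: the `k`-dimensional (nonempty) exposed faces of `P̄`. -/
def faces (k : ℕ) : Set (Set (EuclideanSpace ℝ (Fin n))) :=
  {F | IsExposed ℝ P.cl F ∧ F.Nonempty ∧ sdim F = k}

/-- `a_k(P)`: the number of `k`-faces of `P`. -/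
def a (k : ℕ) : ℕ := (P.faces k).ncard

/-- Vertices of `P`: the points of `0`-dimensional exposed faces of `P̄`. -/
def verts : Set (EuclideanSpace ℝ (Fin n)) :=
  {v | IsExposed ℝ P.cl {v}}

/-- Ideal vertices: vertices lying on the unit sphere. -/
def idealVerts : Set (EuclideanSpace ℝ (Fin n)) :=
  {v ∈ P.verts | ‖v‖ = 1}

/-- Finite vertices: vertices lying in the open unit ball. -/
def finiteVerts : Set (EuclideanSpace ℝ (Fin n)) :=
  {v ∈ P.verts | ‖v‖ < 1}

/-- `v_∞(P)`: the number of ideal vertices of `P`. -/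
def vInf : ℕ := P.idealVerts.ncard

/-- The bounding hyperplane `H_e` contains the face `F`. -/
def faceInHyperplane (e : Fin (n + 1) → ℝ) (F : Set (EuclideanSpace ℝ (Fin n))) : Prop :=
  ∀ x ∈ P.carrier, kleinMap x ∈ F → mink e x = 0

/-- `P` is right-angled: whenever two distinct bounding hyperplanes both contain an
`(n-2)`-dimensional face of `P`, the corresponding unit normals are orthogonal,
i.e. the dihedral angle is `π/2`. -/
def IsRightAngled : Prop :=
  ∀ i j : Fin P.m, i ≠ j →
    (∃ F ∈ P.faces (n - 2), P.faceInHyperplane (P.e i) F ∧ P.faceInHyperplane (P.e j) F) →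
    mink (P.e i) (P.e j) = 0

/-- `P` has finite volume: `P̄` is the convex hull of its (finitely many) vertices. -/
def FiniteVolume : Prop :=
  P.verts.Finite ∧ P.cl = convexHull ℝ P.verts

/-- `P` is compact: finite volume and all vertices are finite. -/
def IsCompactPoly : Prop :=
  P.FiniteVolume ∧ ∀ v ∈ P.verts, ‖v‖ < 1

/-- `P` is ideal: finite volume and all vertices are ideal. -/
def IsIdeal : Prop :=
  P.FiniteVolume ∧ ∀ v ∈ P.verts, ‖v‖ = 1

end HypPolyhedron

/-- `ν(P) = a_{n-1}(P) + v_∞(P)` ranging over the family `𝒫ⁿ` of finite-volume non-compact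
right-angled convex hyperbolic `n`-polyhedra. -/
def nuSet (n : ℕ) : Set ℕ :=
  {m | ∃ P : HypPolyhedron n,
        P.FiniteVolume ∧ P.IsRightAngled ∧ ¬ P.IsCompactPoly ∧ P.a (n - 1) + P.vInf = m}

/-- `νₙ = sInf {ν(P) : P ∈ 𝒫ⁿ}` (with `sInf ∅ = 0`). -/
def nu (n : ℕ) : ℕ := sInf (nuSet n)

/-!
Let `p` be a point of hyperbolic space in the relative interior of an edge. The lineality space of
the tangent cone of the polyhedron at `p` is then the direction of the edge, so if the cone is cut
out by linearly independent walls, there are `n - 1` of them, and they correspond to the facets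
through `p`, that is, to the facets containing the edge.

Independence comes from the right angles. For walls through `p` the Minkowski form on the normals
is the Klein metric at `p`, hence positive definite. A facet `j` of the cone is cut out within its
hyperplane by the walls it meets along ridges. All of these are orthogonal to it, so the orthogonal
projection to this hyperplane maps the cone into itself. Applied to a point in the relative interior
of another facet `k`, this shows that the normals of `j` and `k` do not make an acute angle. Vectors
in an open half-space whose pairwise inner products are nonpositive are linearly independent.
-/

open Filter Module Set Topology

section PolyhedralCone

variable {ι V : Type*} [AddCommGroup V] [Module ℝ V]

/-- The cone `{v | f i v ≤ 0 for all i ∈ S}` cut out by a family of linear functionals. The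
subsystem `S` is kept apart from the family so that a system can be compared with its parts. -/
def polyhedralCone (f : ι → Dual ℝ V) (S : Set ι) : PointedCone ℝ V where
  carrier := {v | ∀ i ∈ S, f i v ≤ 0}
  zero_mem' := by simp
  add_mem' hv hw i hi := by simpa using add_nonpos (hv i hi) (hw i hi)
  smul_mem' c v hv i hi := by
    simpa [← Nonneg.coe_smul] using mul_nonpos_of_nonneg_of_nonpos c.2 (hv i hi)

/-- The system `f i v ≤ 0`, `i ∈ J`, is irredundant: each inequality can be made tight while all
the others stay strict, so that each of them defines a facet of the cone. -/
def IsIrredundant (f : ι → Dual ℝ V) (J : Set ι) : Prop :=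
  ∀ k ∈ J, ∃ z, f k z = 0 ∧ ∀ i ∈ J, i ≠ k → f i z < 0

variable {f : ι → Dual ℝ V} {S T J : Set ι}

@[simp]
theorem mem_polyhedralCone {v : V} : v ∈ polyhedralCone f S ↔ ∀ i ∈ S, f i v ≤ 0 := Iff.rfl

theorem mem_lineal_polyhedralCone {v : V} :
    v ∈ (polyhedralCone f S).lineal ↔ ∀ i ∈ S, f i v = 0 := by
  simp only [PointedCone.mem_lineal, mem_polyhedralCone, map_neg, neg_nonpos, le_antisymm_iff,
    ← forall₂_and]

theorem finrank_lineal_add_ncard [FiniteDimensional ℝ V] (hf : LinearIndepOn ℝ f S) :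
    finrank ℝ (polyhedralCone f S).lineal + S.ncard = finrank ℝ V := by
  have := hf.finite
  have := Fintype.ofFinite S
  have hlineal : (polyhedralCone f S).lineal =
      (Submodule.span ℝ (range fun i : S => f i)).dualCoannihilator := by
    refine SetLike.coe_injective ?_
    rw [Submodule.coe_dualCoannihilator_span]
    ext v
    exact mem_lineal_polyhedralCone.trans (by simp)
  rw [hlineal, ← Nat.card_coe_set_eq, Nat.card_eq_fintype_card, ← finrank_span_eq_card hf, add_comm]
  exact Subspace.finrank_add_finrank_dualCoannihilator_eq _

theorem mem_polyhedralCone_of_eq_zero {k : ι} {z : V} (hz : f k z = 0)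
    (h : ∀ i ∈ S, i ≠ k → f i z ≤ 0) : z ∈ polyhedralCone f S := fun i hi => by
  by_cases hik : i = k
  · exact (hik ▸ hz).le
  · exact h i hi hik

theorem IsIrredundant.exists_mem_polyhedralCone (hJ : IsIrredundant f J) {k : ι} (hk : k ∈ J) :
    ∃ z ∈ polyhedralCone f J, f k z = 0 ∧ ∀ i ∈ J, i ≠ k → f i z < 0 := by
  obtain ⟨z, hzk, hz⟩ := hJ k hk
  exact ⟨z, mem_polyhedralCone_of_eq_zero hzk fun i hi hik => (hz i hi hik).le, hzk, hz⟩

theorem exists_isIrredundant_subset [Finite ι] {y : V} (hy : ∀ i ∈ S, f i y < 0) :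
    ∃ J ⊆ S, polyhedralCone f J = polyhedralCone f S ∧ IsIrredundant f J := by
  obtain ⟨J, hJS, hJ, hmin⟩ := exists_minimal_le_of_wellFoundedLT
    (fun T => polyhedralCone f T ≤ polyhedralCone f S) S le_rfl
  refine ⟨J, hJS, hJ.antisymm fun v hv i hi => hv i (hJS hi), fun k hk => ?_⟩
  obtain ⟨v, hv, hvS⟩ : ∃ v ∈ polyhedralCone f (J \ {k}), v ∉ polyhedralCone f S :=
    SetLike.not_le_iff_exists.1 fun h => (hmin h sdiff_subset hk).2 rfl
  have hkv : 0 < f k v := by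
    by_contra! hle
    refine hvS (hJ fun i hi => ?_)
    by_cases hik : i = k
    · exact hik ▸ hle
    · exact hv i ⟨hi, hik⟩
  -- the segment from `y` to `v` leaves the cone through the facet defined by `k`
  refine ⟨f k v • y - f k y • v, by simp [mul_comm], fun i hi hik => ?_⟩
  have hiv : f i v ≤ 0 := hv i ⟨hi, hik⟩
  have hiy : f k v * f i y < 0 := mul_neg_of_pos_of_neg hkv (hy i (hJS hi))
  have hky : 0 ≤ f k y * f i v := mul_nonneg_of_nonpos_of_nonpos (hy k (hJS hk)).le hiv
  simpa using hiy.trans_le hky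

theorem eventually_add_smul_le [Finite ι] {b : ι → ℝ} {z v : V} (hz : ∀ i ∈ S, f i z ≤ b i)
    (hv : ∀ i ∈ S, f i z = b i → f i v ≤ 0) :
    ∀ᶠ t : ℝ in 𝓝[>] 0, ∀ i ∈ S, f i (z + t • v) ≤ b i := by
  rw [eventually_all_finite S.toFinite]
  intro i hi
  simp only [map_add, map_smul, smul_eq_mul]
  rcases (hz i hi).eq_or_lt with heq | hlt
  · filter_upwards [self_mem_nhdsWithin] with t ht
    rw [heq, add_le_iff_nonpos_right]
    exact mul_nonpos_of_nonneg_of_nonpos (mem_Ioi.1 ht).le (hv i hi heq)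
  · have hlim : Tendsto (fun t : ℝ => f i z + t * f i v) (𝓝 0) (𝓝 (f i z)) :=
      Continuous.tendsto' (by fun_prop) 0 _ (by simp)
    exact nhdsWithin_le_nhds (hlim.eventually_le_const hlt)

/-- The linear span of the face of `C` on which the functionals `f i`, `i ∈ S`, vanish; its rank is
the dimension of that face. -/
def faceSpan (f : ι → Dual ℝ V) (C : PointedCone ℝ V) (S : Set ι) : Submodule ℝ V :=
  Submodule.span ℝ (C ∩ (polyhedralCone f S).lineal)

theorem faceSpan_le_lineal {C : PointedCone ℝ V} : faceSpan f C S ≤ (polyhedralCone f S).lineal :=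
  Submodule.span_le.2 inter_subset_right

/-- The point `z` lies in the relative interior of the face. -/
theorem faceSpan_eq_lineal [Finite ι] {C : PointedCone ℝ V} {z : V}
    (hC : ∀ v ∈ (polyhedralCone f S).lineal, v ∈ polyhedralCone f T → v ∈ C)
    (hz : z ∈ (polyhedralCone f S).lineal) (hneg : ∀ i ∈ T, i ∉ S → f i z < 0) :
    faceSpan f C S = (polyhedralCone f S).lineal := by
  refine faceSpan_le_lineal.antisymm fun v hv => ?_
  have hzT : z ∈ polyhedralCone f T := fun i hi => by
    by_cases hiS : i ∈ S
    · exact (mem_lineal_polyhedralCone.1 hz i hiS).le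
    · exact (hneg i hi hiS).le
  have hvT : ∀ i ∈ T, f i z = 0 → f i v ≤ 0 := fun i hi hiz =>
    (mem_lineal_polyhedralCone.1 hv i (by_contra fun hiS => (hneg i hi hiS).ne hiz)).le
  obtain ⟨t, ht, ht0⟩ :=
    ((eventually_add_smul_le hzT hvT).and self_mem_nhdsWithin).exists
  have hztv := add_mem hz (Submodule.smul_mem _ t hv)
  have hz_span : z ∈ faceSpan f C S := Submodule.subset_span ⟨hC z hz hzT, hz⟩
  have hztv_span : z + t • v ∈ faceSpan f C S := Submodule.subset_span ⟨hC _ hztv ht, hztv⟩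
  rwa [Submodule.add_mem_iff_right _ hz_span,
    Submodule.smul_mem_iff _ (mem_Ioi.1 ht0).ne'] at hztv_span

theorem eq_zero_of_nonpos_on_polyhedralCone [Finite ι] {l : Dual ℝ V} {u : V}
    (hl : ∀ v ∈ polyhedralCone f S, l v ≤ 0) (hu : ∀ i ∈ S, f i u < 0) (hlu : l u = 0) :
    l = 0 := by
  have hle : ∀ v, l v ≤ 0 := fun v => by
    obtain ⟨t, ht, ht0⟩ := ((eventually_add_smul_le (b := 0) (v := v) (fun i hi => (hu i hi).le)
      fun i hi h => absurd h (hu i hi).ne).and self_mem_nhdsWithin).exists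
    have htv : t * l v ≤ 0 := by simpa [hlu] using hl _ ht
    exact nonpos_of_mul_nonpos_right htv ht0
  exact LinearMap.ext fun v => le_antisymm (hle v) (by simpa using hle (-v))

/-- The ridges of the cone inside the facet `j` cut out that facet. -/
theorem IsIrredundant.exists_ridges [Finite ι] [FiniteDimensional ℝ V] (hJ : IsIrredundant f J)
    {j : ι} (hj : j ∈ J) (hfj : f j ≠ 0) :
    ∃ T ⊆ J, (∀ v ∈ polyhedralCone f T, f j v = 0 → v ∈ polyhedralCone f J) ∧
      ∀ k ∈ T, j ≠ k ∧ finrank ℝ (faceSpan f (polyhedralCone f J) {j, k}) + 2 = finrank ℝ V := by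
  obtain ⟨y, hyj, hy⟩ := hJ j hj
  let H := LinearMap.ker (f j)
  obtain ⟨T, hTJ, hT, hirr⟩ := exists_isIrredundant_subset
    (f := fun i => (f i).domRestrict H) (S := J \ {j}) (y := ⟨y, hyj⟩) fun i hi => hy i hi.1 hi.2
  have hcone : ∀ v ∈ polyhedralCone f T, f j v = 0 → v ∈ polyhedralCone f J := fun v hv hvj =>
    have hvT : (⟨v, hvj⟩ : H) ∈ polyhedralCone (fun i => (f i).domRestrict H) (J \ {j}) :=
      hT ▸ hv
    mem_polyhedralCone_of_eq_zero hvj fun i hi hij => hvT i ⟨hi, hij⟩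
  refine ⟨T, hTJ.trans sdiff_subset, hcone, fun k hk => ?_⟩
  obtain ⟨⟨z, hzj⟩, hzk, hz⟩ := hirr k hk
  have hkj : j ≠ k := fun h => (hTJ hk).2 h.symm
  have hind : LinearIndepOn ℝ f {j, k} := by
    rw [linearIndepOn_pair_iff f hkj hfj]
    rintro c hc
    have hky : f k y < 0 := hy k (hTJ hk).1 hkj.symm
    rw [← hc, LinearMap.smul_apply, hyj, smul_zero] at hky
    exact hky.false
  refine ⟨hkj, ?_⟩
  rw [faceSpan_eq_lineal (T := T) (z := z), ← ncard_pair hkj]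
  · exact finrank_lineal_add_ncard hind
  · exact fun v hv hvT => hcone v hvT (mem_lineal_polyhedralCone.1 hv j (by simp))
  · exact mem_lineal_polyhedralCone.2 (by simpa using ⟨hzj, hzk⟩)
  · exact fun i hi hijk => hz i hi fun h => hijk (by simp [h])

section BilinForm

variable {B : LinearMap.BilinForm ℝ V} {u : ι → V}

/-- The orthogonal projection to the hyperplane `f j = 0` maps the cone into its facet `j`; apply
this to a point of the facet `k`. -/
theorem apply_nonpos_of_orthogonal_ridges (hsymm : B.IsSymm) (hu : ∀ i ∈ J, f i = B (u i))
    (hJ : IsIrredundant f J) {j k : ι} (hj : j ∈ J) (hk : k ∈ J) (hjk : j ≠ k)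
    (hpos : 0 < B (u j) (u j)) (hTJ : T ⊆ J)
    (hcone : ∀ v ∈ polyhedralCone f T, f j v = 0 → v ∈ polyhedralCone f J)
    (horth : ∀ i ∈ T, B (u j) (u i) = 0) : B (u j) (u k) ≤ 0 := by
  obtain ⟨x, hx, hxk, hxneg⟩ := hJ.exists_mem_polyhedralCone hk
  set c := f j x / B (u j) (u j) with hc
  have hcomm : ∀ v w, B v w = B w v := fun v w => by simpa using hsymm.eq v w
  have hproj : x - c • u j ∈ polyhedralCone f J := by
    refine hcone _ (fun i hi => ?_) ?_
    · simpa [hu i (hTJ hi), hcomm (u i), horth i hi] using hx i (hTJ hi)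
    · simp [hu j hj, hc, hpos.ne']
  have hc0 : c < 0 := div_neg_of_neg_of_pos (hxneg j hj hjk) hpos
  have hkproj : 0 ≤ c * B (u k) (u j) := by
    have := hproj k hk
    rwa [map_sub, hxk, map_smul, zero_sub, neg_nonpos, hu k hk] at this
  rw [hcomm]
  exact nonpos_of_mul_nonneg_right hkproj hc0

theorem IsIrredundant.linearIndepOn_of_rightAngled [Finite ι] [FiniteDimensional ℝ V]
    (hJ : IsIrredundant f J) (hB : B.toQuadraticMap.PosDef) (hsymm : B.IsSymm)
    (hu : ∀ i ∈ J, f i = B (u i)) {x₀ : V} (hx₀ : ∀ i ∈ J, f i x₀ < 0)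
    (hright : ∀ j ∈ J, ∀ k ∈ J, j ≠ k →
      finrank ℝ (faceSpan f (polyhedralCone f J) {j, k}) + 2 = finrank ℝ V → B (u j) (u k) = 0) :
    LinearIndepOn ℝ f J := by
  have hfj : ∀ j ∈ J, f j ≠ 0 := fun j hj h => by simpa [h] using hx₀ j hj
  have hobtuse : Pairwise fun j k : J => B (u j) (u k) ≤ 0 := fun ⟨j, hj⟩ ⟨k, hk⟩ hjk => by
    obtain ⟨T, hTJ, hcone, hridge⟩ := hJ.exists_ridges hj (hfj j hj)
    exact apply_nonpos_of_orthogonal_ridges hsymm hu hJ hj hk (Subtype.coe_ne_coe.2 hjk)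
      (hB _ fun h => hfj j hj (by simp [hu j hj, h])) hTJ hcone
      fun i hi => hright j hj i (hTJ hi) (hridge i hi).1 (hridge i hi).2
  have hind : LinearIndependent ℝ fun j : J => u j :=
    B.linearIndependent_of_pairwise_le_zero hB (-B x₀) _
      (fun j => by simpa [hsymm.eq x₀, hu j j.2] using hx₀ j j.2) hobtuse
  have hker : LinearMap.ker B = ⊥ := LinearMap.ker_eq_bot'.2 fun v hv => by
    by_contra hv0
    simpa [hv] using hB v hv0
  exact (linearIndepOn_congr fun j hj => hu j hj).2 (hind.map' B hker)

end BilinForm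

end PolyhedralCone

section ExposedFaces

variable {E : Type*} [AddCommGroup E] [TopologicalSpace E] [Module ℝ E] {A F : Set E}

theorem isExposed_setOf_forall_eq {ι : Type*} [Finite ι] (l : ι → StrongDual ℝ E) {c : ι → ℝ}
    (S : Set ι) (hle : ∀ y ∈ A, ∀ i ∈ S, l i y ≤ c i) :
    IsExposed ℝ A {y ∈ A | ∀ i ∈ S, l i y = c i} := by
  rintro ⟨x, hxA, hx⟩
  let s := S.toFinite.toFinset
  have hsum : ∀ y ∈ A, (∑ i ∈ s, l i) y ≤ ∑ i ∈ s, c i := fun y hy => by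
    simpa using Finset.sum_le_sum fun i hi => hle y hy i (S.toFinite.mem_toFinset.1 hi)
  have hsum_eq : ∀ y ∈ A, (∑ i ∈ s, l i) y = ∑ i ∈ s, c i ↔ ∀ i ∈ S, l i y = c i := fun y hy => by
    simpa [s] using Finset.sum_eq_sum_iff_of_le fun i hi =>
      hle y hy i (S.toFinite.mem_toFinset.1 hi)
  refine ⟨∑ i ∈ s, l i, Set.ext fun y => and_congr_right fun hy => ?_⟩
  rw [← hsum_eq y hy]
  refine ⟨fun h z hz => h ▸ hsum z hz, fun h => (hsum y hy).antisymm ?_⟩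
  exact (hsum_eq x hxA).2 hx ▸ h x hxA

theorem vectorSpan_toExposed_le_ker (l : StrongDual ℝ E) :
    vectorSpan ℝ (l.toExposed A) ≤ LinearMap.ker l.toLinearMap := by
  refine Submodule.span_le.2 ?_
  rintro _ ⟨y, hy, z, hz, rfl⟩
  simpa [sub_eq_zero] using (hz.2 y hy.1).antisymm (hy.2 z hz.1)

theorem mem_of_sub_mem_vectorSpan_of_isExposed {p x : E} (hF : IsExposed ℝ A F) (hp : p ∈ F)
    (hx : x ∈ A) (hxp : x - p ∈ vectorSpan ℝ F) : x ∈ F := by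
  obtain ⟨l, rfl⟩ := hF ⟨p, hp⟩
  have hlx : l x = l p := by simpa [sub_eq_zero] using vectorSpan_toExposed_le_ker l hxp
  exact ⟨hx, hlx ▸ hp.2⟩

theorem eq_of_subset_of_isExposed {G : Set E} (hF : IsExposed ℝ A F) (hne : F.Nonempty)
    (hGA : G ⊆ A) (hFG : F ⊆ G) (hspan : vectorSpan ℝ F = vectorSpan ℝ G) : F = G := by
  obtain ⟨p, hp⟩ := hne
  refine hFG.antisymm fun x hx => mem_of_sub_mem_vectorSpan_of_isExposed hF hp (hGA hx) ?_
  exact hspan ▸ vsub_mem_vectorSpan ℝ hx (hFG hp)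

end ExposedFaces

section KleinModel

/-- The Klein metric at the point `p` of the unit ball, up to a positive factor. -/
def kleinForm {E : Type*} [NormedAddCommGroup E] [InnerProductSpace ℝ E] (p : E) :
    LinearMap.BilinForm ℝ E :=
  innerₗ E + (1 - ‖p‖ ^ 2)⁻¹ • (innerₗ E p).smulRight (innerₗ E p)

section InnerProductSpace

variable {E : Type*} [NormedAddCommGroup E] [InnerProductSpace ℝ E]

theorem kleinForm_apply (p v w : E) :
    kleinForm p v w = inner ℝ v w + (1 - ‖p‖ ^ 2)⁻¹ * (inner ℝ p v * inner ℝ p w) := by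
  simp [kleinForm]

theorem isSymm_kleinForm (p : E) : (kleinForm p).IsSymm :=
  ⟨fun v w => by simp [kleinForm_apply, real_inner_comm, mul_comm]⟩

theorem posDef_kleinForm {p : E} (hp : ‖p‖ < 1) : (kleinForm p).toQuadraticMap.PosDef := by
  intro v hv
  have hp' : 0 ≤ (1 - ‖p‖ ^ 2)⁻¹ :=
    inv_nonneg.2 (sub_nonneg.2 (pow_le_one₀ (norm_nonneg p) hp.le))
  rw [LinearMap.BilinMap.toQuadraticMap_apply, kleinForm_apply]
  exact add_pos_of_pos_of_nonneg (real_inner_self_pos.2 hv)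
    (mul_nonneg hp' (mul_self_nonneg _))

end InnerProductSpace

variable {n : ℕ}

/-- The spatial part of a vector of Minkowski space. -/
def spatial (x : Fin (n + 1) → ℝ) : EuclideanSpace ℝ (Fin n) :=
  WithLp.toLp 2 fun i => x i.succ

theorem mink_eq_inner_spatial (x y : Fin (n + 1) → ℝ) :
    mink x y = inner ℝ (spatial x) (spatial y) - x 0 * y 0 := by
  simp [mink, spatial, PiLp.inner_apply, neg_add_eq_sub, mul_comm]

theorem spatial_eq_smul_kleinMap {x : Fin (n + 1) → ℝ} (hx : x 0 ≠ 0) :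
    spatial x = x 0 • kleinMap x := by
  ext i
  simp [spatial, kleinMap, mul_div_cancel₀ _ hx]

theorem mink_eq_mul_kleinMap (e : Fin (n + 1) → ℝ) {x : Fin (n + 1) → ℝ} (hx : x 0 ≠ 0) :
    mink e x = x 0 * (inner ℝ (spatial e) (kleinMap x) - e 0) := by
  rw [mink_eq_inner_spatial, spatial_eq_smul_kleinMap hx, real_inner_smul_right]
  ring

theorem norm_kleinMap_lt_one {x : Fin (n + 1) → ℝ} (hx : x ∈ Hyperboloid n) :
    ‖kleinMap x‖ < 1 := by
  have hxx : x 0 ^ 2 * (‖kleinMap x‖ ^ 2 - 1) = -1 := by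
    rw [← hx.1, mink_eq_mul_kleinMap x hx.2.ne', spatial_eq_smul_kleinMap hx.2.ne',
      real_inner_smul_left, real_inner_self_eq_norm_sq]
    ring
  have hneg : ‖kleinMap x‖ ^ 2 - 1 < 0 :=
    neg_of_mul_neg_right (hxx.trans_lt (by norm_num)) (sq_nonneg _)
  exact (sq_lt_one_iff₀ (norm_nonneg _)).1 (sub_neg.1 hneg)

theorem exists_mem_hyperboloid_kleinMap_eq {y : EuclideanSpace ℝ (Fin n)} (hy : ‖y‖ < 1) :
    ∃ x ∈ Hyperboloid n, kleinMap x = y := by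
  have hpos : 0 < 1 - ‖y‖ ^ 2 := sub_pos.2 ((sq_lt_one_iff₀ (norm_nonneg y)).2 hy)
  set c := (√(1 - ‖y‖ ^ 2))⁻¹ with hc
  have hc0 : 0 < c := inv_pos.2 (Real.sqrt_pos.2 hpos)
  have hcc : c ^ 2 * (1 - ‖y‖ ^ 2) = 1 := by
    rw [hc, inv_pow, Real.sq_sqrt hpos.le, inv_mul_cancel₀ hpos.ne']
  let x : Fin (n + 1) → ℝ := Fin.cons c fun i => c * y i
  have hxy : kleinMap x = y := by
    ext i
    simp [x, kleinMap, hc0.ne']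
  have hx0 : 0 < x 0 := hc0
  refine ⟨x, ⟨?_, hx0⟩, hxy⟩
  rw [mink_eq_mul_kleinMap x hx0.ne', spatial_eq_smul_kleinMap hx0.ne', hxy, real_inner_smul_left,
    real_inner_self_eq_norm_sq, show x 0 = c from rfl]
  linear_combination -hcc

end KleinModel

namespace HypPolyhedron

variable {n : ℕ} (P : HypPolyhedron n)

/-- The linear part of the `i`-th bounding half-space in the Klein model, which is
`{y | P.wall i y ≤ P.e i 0}`. -/
def wall (i : Fin P.m) : Dual ℝ (EuclideanSpace ℝ (Fin n)) :=
  innerₗ _ (spatial (P.e i))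

/-- The indices of the walls passing through a point of the Klein model. -/
def active (p : EuclideanSpace ℝ (Fin n)) : Set (Fin P.m) :=
  {i | P.wall i p = P.e i 0}

/-- The cone of directions at `p` that point into the polyhedron. -/
def tangentCone (p : EuclideanSpace ℝ (Fin n)) : PointedCone ℝ (EuclideanSpace ℝ (Fin n)) :=
  polyhedralCone P.wall (P.active p)

/-- The face of the polyhedron in which it meets all the walls `i ∈ S`. -/
def wallFace (S : Set (Fin P.m)) : Set (EuclideanSpace ℝ (Fin n)) :=
  {y ∈ P.cl | ∀ i ∈ S, P.wall i y = P.e i 0}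

variable {P} {p : EuclideanSpace ℝ (Fin n)}

theorem wall_apply (i : Fin P.m) (y : EuclideanSpace ℝ (Fin n)) :
    P.wall i y = inner ℝ (spatial (P.e i)) y := rfl

theorem continuous_wall (i : Fin P.m) : Continuous (P.wall i) :=
  (P.wall i).continuous_of_finiteDimensional

theorem wall_ne_zero (i : Fin P.m) : P.wall i ≠ 0 := by
  intro h
  have hunit := P.unit i
  rw [mink_eq_inner_spatial, ← wall_apply, h, LinearMap.zero_apply] at hunit
  linarith [mul_self_nonneg (P.e i 0)]

theorem mem_image_carrier :
    p ∈ kleinMap '' P.carrier ↔ ‖p‖ < 1 ∧ ∀ i, P.wall i p ≤ P.e i 0 := by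
  have hmink : ∀ x ∈ Hyperboloid n, ∀ i, mink (P.e i) x ≤ 0 ↔ P.wall i (kleinMap x) ≤ P.e i 0 :=
    fun x hx i => by
      rw [mink_eq_mul_kleinMap _ hx.2.ne', ← smul_eq_mul, smul_nonpos_iff_nonpos_of_pos_left hx.2,
        sub_nonpos, wall_apply]
  constructor
  · rintro ⟨x, ⟨hx, hxP⟩, rfl⟩
    exact ⟨norm_kleinMap_lt_one hx, fun i => (hmink x hx i).1 (hxP i)⟩
  · rintro ⟨hp, hpP⟩
    obtain ⟨x, hx, rfl⟩ := exists_mem_hyperboloid_kleinMap_eq hp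
    exact ⟨x, ⟨hx, fun i => (hmink x hx i).2 (hpP i)⟩, rfl⟩

theorem wall_le_of_mem_cl {y : EuclideanSpace ℝ (Fin n)} (hy : y ∈ P.cl) (i : Fin P.m) :
    P.wall i y ≤ P.e i 0 :=
  closure_minimal (fun _ hz => (mem_image_carrier.1 hz).2 i)
    (isClosed_le (continuous_wall i) continuous_const) hy

theorem norm_le_one_of_mem_cl {y : EuclideanSpace ℝ (Fin n)} (hy : y ∈ P.cl) : ‖y‖ ≤ 1 :=
  closure_minimal (fun _ hz => (mem_image_carrier.1 hz).1.le)
    (isClosed_le continuous_norm continuous_const) hy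

theorem convex_cl : Convex ℝ P.cl := by
  have hinter : kleinMap '' P.carrier = Metric.ball 0 1 ∩ ⋂ i, {y | P.wall i y ≤ P.e i 0} := by
    ext y
    rw [mem_image_carrier]
    simp
  rw [cl, hinter]
  exact ((convex_ball _ _).inter
    (convex_iInter fun i => convex_halfSpace_le (P.wall i).isLinear _)).closure

theorem vectorSpan_cl : vectorSpan ℝ P.cl = ⊤ :=
  AffineSubspace.vectorSpan_eq_top_of_affineSpan_eq_top ℝ _ _ <|
    convex_cl.interior_nonempty_iff_affineSpan_eq_top.1 <|
      P.nonempty_int.mono (interior_mono subset_closure)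

theorem exists_forall_wall_lt : ∃ q, ∀ i, P.wall i q < P.e i 0 := by
  obtain ⟨q, hq⟩ := P.nonempty_int
  refine ⟨q, fun i => ?_⟩
  have hopen : IsOpenMap (P.wall i) :=
    (P.wall i).isOpenMap_of_finiteDimensional (LinearMap.surjective (wall_ne_zero i))
  have hq' : q ∈ interior (P.wall i ⁻¹' Iic (P.e i 0)) :=
    interior_mono (fun _ hz => (mem_image_carrier.1 hz).2 i) hq
  simpa using hopen.interior_preimage_subset_preimage_interior hq'

theorem sub_mem_tangentCone {y : EuclideanSpace ℝ (Fin n)} (hy : y ∈ P.cl) :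
    y - p ∈ P.tangentCone p := fun i hi => by
  rw [map_sub, sub_nonpos, show P.wall i p = P.e i 0 from hi]
  exact wall_le_of_mem_cl hy i

theorem eventually_add_smul_mem_cl {u : EuclideanSpace ℝ (Fin n)}
    (hp : p ∈ kleinMap '' P.carrier) (hu : u ∈ P.tangentCone p) :
    ∀ᶠ t : ℝ in 𝓝[>] 0, p + t • u ∈ P.cl := by
  obtain ⟨hnorm, hwall⟩ := mem_image_carrier.1 hp
  have hlim : Tendsto (fun t : ℝ => ‖p + t • u‖) (𝓝 0) (𝓝 ‖p‖) :=
    Continuous.tendsto' (by fun_prop) 0 _ (by simp)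
  filter_upwards [nhdsWithin_le_nhds (hlim.eventually_lt_const hnorm),
    eventually_add_smul_le (S := univ) (fun i _ => hwall i) fun i _ => hu i] with t hnorm_t hwall_t
  exact subset_closure (mem_image_carrier.2 ⟨hnorm_t, fun i => hwall_t i (mem_univ i)⟩)

theorem lineal_tangentCone_le_vectorSpan {F : Set (EuclideanSpace ℝ (Fin n))}
    (hF : IsExposed ℝ P.cl F) (hp : p ∈ kleinMap '' P.carrier) (hpF : p ∈ F) :
    (P.tangentCone p).lineal ≤ vectorSpan ℝ F := by
  intro v hv
  obtain ⟨hvpos, hvneg⟩ := PointedCone.mem_lineal.1 hv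
  obtain ⟨t, ⟨hpos, hneg⟩, ht⟩ := (((eventually_add_smul_mem_cl hp hvpos).and
    (eventually_add_smul_mem_cl hp hvneg)).and self_mem_nhdsWithin).exists
  rw [smul_neg, ← sub_eq_add_neg] at hneg
  have hmem : p + t • v ∈ F := hF.isExtreme.left_mem_of_mem_openSegment hpos hneg hpF
    (mem_openSegment_add_sub p (t • v))
  have htv := vsub_mem_vectorSpan ℝ hmem hpF
  rw [vsub_eq_sub, add_sub_cancel_left] at htv
  exact (Submodule.smul_mem_iff _ (mem_Ioi.1 ht).ne').1 htv

theorem vectorSpan_wallFace {S : Set (Fin P.m)} (hp : p ∈ kleinMap '' P.carrier)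
    (hS : S ⊆ P.active p) :
    vectorSpan ℝ (P.wallFace S) = faceSpan P.wall (P.tangentCone p) S := by
  have hpS : p ∈ P.wallFace S := ⟨subset_closure hp, hS⟩
  rw [vectorSpan_eq_span_vsub_set_right ℝ hpS]
  refine le_antisymm (Submodule.span_mono ?_) (Submodule.span_le.2 ?_)
  · rintro _ ⟨y, hy, rfl⟩
    simp only [vsub_eq_sub]
    exact ⟨sub_mem_tangentCone hy.1, mem_lineal_polyhedralCone.2 fun i hi => by
      rw [map_sub, hy.2 i hi, hpS.2 i hi, sub_self]⟩
  · rintro u ⟨hu, huS⟩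
    obtain ⟨t, ht, ht0⟩ := ((eventually_add_smul_mem_cl hp hu).and self_mem_nhdsWithin).exists
    have hmem : p + t • u ∈ P.wallFace S := ⟨ht, fun i hi => by
      rw [map_add, map_smul, mem_lineal_polyhedralCone.1 huS i hi, hpS.2 i hi, smul_zero, add_zero]⟩
    have htu : t • u ∈ Submodule.span ℝ ((· -ᵥ p) '' P.wallFace S) :=
      Submodule.subset_span ⟨_, hmem, by simp⟩
    exact (Submodule.smul_mem_iff _ (mem_Ioi.1 ht0).ne').1 htu

theorem isExposed_wallFace (S : Set (Fin P.m)) : IsExposed ℝ P.cl (P.wallFace S) :=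
  isExposed_setOf_forall_eq (fun i => (P.wall i).toContinuousLinearMap) S
    fun _ hy i _ => wall_le_of_mem_cl hy i

theorem wallFace_mem_faces {S : Set (Fin P.m)} (hp : p ∈ kleinMap '' P.carrier)
    (hS : S ⊆ P.active p) :
    P.wallFace S ∈ P.faces (finrank ℝ (faceSpan P.wall (P.tangentCone p) S)) :=
  ⟨isExposed_wallFace S, ⟨p, subset_closure hp, hS⟩, by rw [sdim, vectorSpan_wallFace hp hS]⟩

theorem faceInHyperplane_wallFace {S : Set (Fin P.m)} {i : Fin P.m} (hi : i ∈ S) :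
    P.faceInHyperplane (P.e i) (P.wallFace S) := fun x hx hxS => by
  rw [mink_eq_mul_kleinMap _ hx.1.2.ne', ← wall_apply, hxS.2 i hi, sub_self, mul_zero]

theorem IsRightAngled.mink_eq_zero (hra : P.IsRightAngled) (hp : p ∈ kleinMap '' P.carrier)
    {j k : Fin P.m} (hj : j ∈ P.active p) (hk : k ∈ P.active p) (hjk : j ≠ k)
    (hdim : finrank ℝ (faceSpan P.wall (P.tangentCone p) {j, k}) + 2 = n) :
    mink (P.e j) (P.e k) = 0 := by
  refine hra j k hjk ⟨P.wallFace {j, k}, ?_, faceInHyperplane_wallFace (by simp),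
    faceInHyperplane_wallFace (by simp)⟩
  rw [← Nat.eq_sub_of_add_eq hdim]
  exact wallFace_mem_faces hp (pair_subset hj hk)

variable (P p) in
/-- The gradient at `p` of the wall `i` through `p` for the form `kleinForm p`, that is, the
Minkowski normal of the wall as a tangent vector of the Klein model. -/
def normal (i : Fin P.m) : EuclideanSpace ℝ (Fin n) :=
  spatial (P.e i) - P.e i 0 • p

theorem wall_eq_kleinForm_normal (hp : ‖p‖ < 1) {i : Fin P.m} (hi : i ∈ P.active p) :
    P.wall i = kleinForm p (P.normal p i) := by
  have hp' : 1 - ‖p‖ ^ 2 ≠ 0 := (sub_pos.2 ((sq_lt_one_iff₀ (norm_nonneg p)).2 hp)).ne'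
  have hi' : inner ℝ p (spatial (P.e i)) = P.e i 0 := (real_inner_comm _ _).trans hi
  ext v
  rw [kleinForm_apply, wall_apply, normal, inner_sub_left, inner_sub_right, real_inner_smul_left,
    real_inner_smul_right, hi', real_inner_self_eq_norm_sq]
  field_simp
  ring

theorem kleinForm_normal_normal (hp : ‖p‖ < 1) {i j : Fin P.m} (hi : i ∈ P.active p) :
    kleinForm p (P.normal p i) (P.normal p j) = mink (P.e i) (P.e j) := by
  rw [← wall_eq_kleinForm_normal hp hi, normal, map_sub, map_smul,
    show P.wall i p = P.e i 0 from hi, wall_apply, mink_eq_inner_spatial, smul_eq_mul, mul_comm]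

theorem IsRightAngled.exists_linearIndepOn_wall (hra : P.IsRightAngled)
    (hp : p ∈ kleinMap '' P.carrier) :
    ∃ J ⊆ P.active p, polyhedralCone P.wall J = P.tangentCone p ∧ IsIrredundant P.wall J ∧
      LinearIndepOn ℝ P.wall J := by
  have hnorm := (mem_image_carrier.1 hp).1
  obtain ⟨q, hq⟩ := P.exists_forall_wall_lt
  have hqp : ∀ i ∈ P.active p, P.wall i (q - p) < 0 := fun i hi => by
    rw [map_sub, sub_neg, show P.wall i p = P.e i 0 from hi]
    exact hq i
  obtain ⟨J, hJp, hcone, hirr⟩ := exists_isIrredundant_subset hqp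
  refine ⟨J, hJp, hcone, hirr, hirr.linearIndepOn_of_rightAngled (posDef_kleinForm hnorm)
    (isSymm_kleinForm p) (fun i hi => wall_eq_kleinForm_normal hnorm (hJp hi))
    (fun i hi => hqp i (hJp hi)) fun j hj k hk hjk hdim => ?_⟩
  rw [hcone, finrank_euclideanSpace_fin] at hdim
  rw [kleinForm_normal_normal hnorm (hJp hj)]
  exact hra.mink_eq_zero hp (hJp hj) (hJp hk) hjk hdim

section Facets

variable {J : Set (Fin P.m)}

theorem exists_mem_vectorSpan_forall_wall_neg (hJp : J ⊆ P.active p)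
    {F : Set (EuclideanSpace ℝ (Fin n))} (hF : F ⊆ P.cl) (hpF : p ∈ F)
    (hJF : ∀ j ∈ J, ¬ F ⊆ P.wallFace {j}) :
    ∃ u ∈ vectorSpan ℝ F, ∀ j ∈ J, P.wall j u < 0 := by
  have hlt : ∀ j ∈ J, ∃ x ∈ F, P.wall j x < P.e j 0 := fun j hj => by
    by_contra! hle
    exact hJF j hj fun x hx => ⟨hF hx, by
      rintro _ rfl
      exact (wall_le_of_mem_cl (hF hx) _).antisymm (hle x hx)⟩
  choose! x hxF hx using hlt
  let s := J.toFinite.toFinset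
  have hs : ∀ {j}, j ∈ s ↔ j ∈ J := J.toFinite.mem_toFinset
  refine ⟨∑ j ∈ s, (x j - p), sum_mem fun j hj => vsub_mem_vectorSpan ℝ (hxF j (hs.1 hj)) hpF,
    fun k hk => ?_⟩
  have hxp : ∀ v, P.wall k (v - p) = P.wall k v - P.e k 0 := fun v => by
    rw [map_sub, show P.wall k p = P.e k 0 from hJp hk]
  simp only [map_sum, hxp]
  exact Finset.sum_neg' (fun j hj => sub_nonpos.2 (wall_le_of_mem_cl (hF (hxF j (hs.1 hj))) k))
    ⟨k, hs.2 hk, sub_neg.2 (hx k hk)⟩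

theorem exists_subset_wallFace (hp : p ∈ kleinMap '' P.carrier) (hJp : J ⊆ P.active p)
    (hcone : polyhedralCone P.wall J = P.tangentCone p) {F : Set (EuclideanSpace ℝ (Fin n))}
    (hF : IsExposed ℝ P.cl F) (hpF : p ∈ F) (hne : F ≠ P.cl) : ∃ j ∈ J, F ⊆ P.wallFace {j} := by
  by_contra! hJF
  obtain ⟨u, huF, hu⟩ := exists_mem_vectorSpan_forall_wall_neg hJp hF.subset hpF hJF
  obtain ⟨l, rfl⟩ := hF ⟨p, hpF⟩
  have hl : ∀ v ∈ polyhedralCone P.wall J, l v ≤ 0 := fun v hv => by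
    obtain ⟨t, ht, ht0⟩ :=
      ((eventually_add_smul_mem_cl hp (hcone ▸ hv)).and self_mem_nhdsWithin).exists
    have htv : t * l v ≤ 0 := by simpa using hpF.2 _ ht
    exact nonpos_of_mul_nonpos_right htv ht0
  have hl0 : l.toLinearMap = 0 :=
    eq_zero_of_nonpos_on_polyhedralCone hl hu (vectorSpan_toExposed_le_ker l huF)
  have hzero : ∀ v, l v = 0 := fun v => LinearMap.congr_fun hl0 v
  exact hne (by simp [hzero])

theorem wallFace_singleton_mem_faces (hp : p ∈ kleinMap '' P.carrier) (hJp : J ⊆ P.active p)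
    (hcone : polyhedralCone P.wall J = P.tangentCone p) (hirr : IsIrredundant P.wall J)
    {j : Fin P.m} (hj : j ∈ J) : P.wallFace {j} ∈ P.faces (n - 1) := by
  obtain ⟨z, hzj, hz⟩ := hirr j hj
  have hspan : faceSpan P.wall (P.tangentCone p) {j} = (polyhedralCone P.wall {j}).lineal :=
    faceSpan_eq_lineal (T := J) (fun v _ hv => hcone ▸ hv)
      (mem_lineal_polyhedralCone.2 (by simpa using hzj)) hz
  have hdim := finrank_lineal_add_ncard (LinearIndepOn.singleton (wall_ne_zero j))
  rw [ncard_singleton, finrank_euclideanSpace_fin] at hdim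
  rw [← Nat.eq_sub_of_add_eq hdim, ← hspan]
  exact wallFace_mem_faces hp (singleton_subset_iff.2 (hJp hj))

theorem injOn_wallFace_singleton (hp : p ∈ kleinMap '' P.carrier) (hJp : J ⊆ P.active p)
    (hcone : polyhedralCone P.wall J = P.tangentCone p) (hirr : IsIrredundant P.wall J) :
    InjOn (fun j => P.wallFace {j}) J := by
  intro j hj k hk hjk
  by_contra hne
  obtain ⟨z, hzJ, hzj, hz⟩ := hirr.exists_mem_polyhedralCone hj
  have hspan := congrArg (vectorSpan ℝ) hjk
  rw [vectorSpan_wallFace hp (singleton_subset_iff.2 (hJp hj)),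
    vectorSpan_wallFace hp (singleton_subset_iff.2 (hJp hk))] at hspan
  have hz_span : z ∈ faceSpan P.wall (P.tangentCone p) {j} := Submodule.subset_span
    ⟨hcone ▸ hzJ, mem_lineal_polyhedralCone.2 (by simpa using hzj)⟩
  have hzk : z ∈ (polyhedralCone P.wall {k}).lineal := faceSpan_le_lineal (hspan ▸ hz_span)
  exact (hz k hk (Ne.symm hne)).ne (mem_lineal_polyhedralCone.1 hzk k rfl)

theorem setOf_facets_mem_eq_image (hn : n ≠ 0) (hp : p ∈ kleinMap '' P.carrier)
    (hJp : J ⊆ P.active p) (hcone : polyhedralCone P.wall J = P.tangentCone p)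
    (hirr : IsIrredundant P.wall J) :
    {F ∈ P.faces (n - 1) | p ∈ F} = (fun j => P.wallFace {j}) '' J := by
  ext F
  constructor
  · rintro ⟨⟨hexp, hne, hdim⟩, hpF⟩
    have hFcl : F ≠ P.cl := by
      rintro rfl
      rw [sdim, vectorSpan_cl, finrank_top, finrank_euclideanSpace_fin] at hdim
      omega
    obtain ⟨j, hj, hFj⟩ := exists_subset_wallFace hp hJp hcone hexp hpF hFcl
    obtain ⟨-, -, hdimj⟩ := wallFace_singleton_mem_faces hp hJp hcone hirr hj
    exact ⟨j, hj, (eq_of_subset_of_isExposed hexp hne (sep_subset _ _) hFj <|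
      Submodule.eq_of_le_of_finrank_eq (vectorSpan_mono ℝ hFj) (hdim.trans hdimj.symm)).symm⟩
  · rintro ⟨j, hj, rfl⟩
    exact ⟨wallFace_singleton_mem_faces hp hJp hcone hirr hj, subset_closure hp,
      fun i hi => hJp (mem_singleton_iff.1 hi ▸ hj)⟩

end Facets

theorem sub_mem_lineal_tangentCone {a b : EuclideanSpace ℝ (Fin n)} (ha : a ∈ P.cl)
    (hb : b ∈ P.cl) (hp : p ∈ openSegment ℝ a b) : b - a ∈ (P.tangentCone p).lineal := by
  have hext := (isExposed_wallFace (P.active p)).isExtreme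
  have hpF : p ∈ P.wallFace (P.active p) :=
    ⟨convex_cl.openSegment_subset ha hb hp, fun _ hi => hi⟩
  have haF := hext.left_mem_of_mem_openSegment ha hb hpF hp
  have hbF := hext.right_mem_of_mem_openSegment ha hb hpF hp
  exact mem_lineal_polyhedralCone.2 fun i hi => by
    rw [map_sub, haF.2 i hi, hbF.2 i hi, sub_self]

theorem exists_vectorSpan_eq_lineal_of_mem_faces_one {L : Set (EuclideanSpace ℝ (Fin n))}
    (hL : L ∈ P.faces 1) :
    ∃ p ∈ L, p ∈ kleinMap '' P.carrier ∧ vectorSpan ℝ L = (P.tangentCone p).lineal := by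
  obtain ⟨hexp, -, hdim⟩ := hL
  have hnt : L.Nontrivial := by
    by_contra hs
    rw [sdim, vectorSpan_of_subsingleton ℝ (not_nontrivial_iff.1 hs), finrank_bot] at hdim
    exact zero_ne_one hdim
  obtain ⟨a, ha, b, hb, hab⟩ := hnt
  have haP := hexp.subset ha
  have hbP := hexp.subset hb
  set p := midpoint ℝ a b
  have hp : p ∈ openSegment ℝ a b := midpoint_mem_openSegment a b
  have hpL : p ∈ L := (hexp.convex convex_cl).openSegment_subset ha hb hp
  have hnorm : p ∈ Metric.ball 0 1 := openSegment_subset_ball_of_ne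
    (mem_closedBall_zero_iff.2 (norm_le_one_of_mem_cl haP))
    (mem_closedBall_zero_iff.2 (norm_le_one_of_mem_cl hbP)) hab hp
  have hpP : p ∈ kleinMap '' P.carrier := mem_image_carrier.2
    ⟨mem_ball_zero_iff.1 hnorm, wall_le_of_mem_cl (hexp.subset hpL)⟩
  refine ⟨p, hpL, hpP, (Submodule.eq_of_le_of_finrank_le
    (lineal_tangentCone_le_vectorSpan hexp hpP hpL) ?_).symm⟩
  rw [show finrank ℝ (vectorSpan ℝ L) = 1 from hdim, Submodule.one_le_finrank_iff]
  exact Submodule.ne_bot_iff _ |>.2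
    ⟨b - a, sub_mem_lineal_tangentCone haP hbP hp, sub_ne_zero.2 hab.symm⟩

end HypPolyhedron

theorem right_angled_simple_at_edges_general (n : ℕ) (P : HypPolyhedron n)
    (hra : P.IsRightAngled) :
    ∀ L ∈ P.faces 1, {F ∈ P.faces (n - 1) | L ⊆ F}.ncard = n - 1 := by
  intro L hL
  obtain ⟨p, hpL, hp, hspan⟩ := HypPolyhedron.exists_vectorSpan_eq_lineal_of_mem_faces_one hL
  obtain ⟨J, hJp, hcone, hirr, hind⟩ := hra.exists_linearIndepOn_wall hp
  have hcard : 1 + J.ncard = n := by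
    have hdim := finrank_lineal_add_ncard hind
    rwa [hcone, ← hspan, finrank_euclideanSpace_fin,
      show finrank ℝ (vectorSpan ℝ L) = 1 from hL.2.2] at hdim
  have hfacets : {F ∈ P.faces (n - 1) | L ⊆ F} = (fun j => P.wallFace {j}) '' J := by
    rw [← HypPolyhedron.setOf_facets_mem_eq_image (by omega) hp hJp hcone hirr]
    refine Subset.antisymm (fun F hF => ⟨hF.1, hF.2 hpL⟩) fun F hF => ⟨hF.1, fun x hx => ?_⟩
    refine mem_of_sub_mem_vectorSpan_of_isExposed hF.1.1 hF.2 (hL.1.subset hx) ?_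
    exact HypPolyhedron.lineal_tangentCone_le_vectorSpan hF.1.1 hp hF.2
      (hspan ▸ vsub_mem_vectorSpan ℝ hx hpL)
  rw [hfacets, (HypPolyhedron.injOn_wallFace_singleton hp hJp hcone hirr).ncard_image]
  omega

/-- Every finite-volume right-angled convex hyperbolic `n`-polyhedron (`n ≥ 2`) is simple
at edges: each `1`-face is contained in exactly `n - 1` facets. -/
theorem right_angled_simple_at_edges (n : ℕ) (hn : 2 ≤ n) (P : HypPolyhedron n)
    (hfv : P.FiniteVolume) (hra : P.IsRightAngled) :
    ∀ L ∈ P.faces 1, {F ∈ P.faces (n - 1) | L ⊆ F}.ncard = n - 1 :=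
  right_angled_simple_at_edges_general n P hra
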